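/- Let r be a positive integer, let n = 2r, and let f : F → 𝔽₂ be defined by f(x) = tr(x^{2^r + 3}). If r is odd, then nl₂(f) ≥ 2^{n−1} − (1/2)·√(2^{3n/2 + 1} + 2^{5n/4 + 1/2} − 2^n − 2^{3n/4 + 1/2}); if r is even, then nl₂(f) ≥ 2^{n−1} − (1/2)·√(2^{3n/2 + 1} + (1/3)·2^{5n/4 + 2} − 2^n − (1/3)·2^{3n/4 + 2}). -/

import Mathlib

noncomputable section

/-- `Fq n` is the finite field with `2 ^ n` elements. -/
abbrev Fq (n : ℕ) : Type := GaloisField 2 n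

/-- The absolute trace map `tr x = x + x^2 + x^4 + ⋯ + x^(2^(n-1))` from `Fq n` to `𝔽₂`. -/
def tr {n : ℕ} (x : Fq n) : ZMod 2 := Algebra.trace (ZMod 2) (Fq n) x

/-- The derivative of `f` with respect to `a`. -/
def der {n : ℕ} (f : Fq n → ZMod 2) (a : Fq n) : Fq n → ZMod 2 :=
  fun x => f x + f (x + a)

/-- Iterated derivatives along a list of directions (head applied last/outermost). -/
def derIter {n : ℕ} (f : Fq n → ZMod 2) : List (Fq n) → (Fq n → ZMod 2)
  | [] => f
  | a :: as => der (derIter f as) a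

/-- `g` has algebraic degree at most `r`: all `(r+1)`-th order derivatives vanish. -/
def degLE {n : ℕ} (g : Fq n → ZMod 2) (r : ℕ) : Prop :=
  ∀ l : List (Fq n), l.length = r + 1 → derIter g l = fun _ => 0

/-- Hamming distance between two Boolean functions on `Fq n`. -/
def hdist {n : ℕ} (f g : Fq n → ZMod 2) : ℕ :=
  {x : Fq n | f x ≠ g x}.ncard

/-- The `r`-th order nonlinearity of `f`. -/
def nl {n : ℕ} (r : ℕ) (f : Fq n → ZMod 2) : ℕ :=
  sInf {d : ℕ | ∃ g : Fq n → ZMod 2, degLE g r ∧ d = hdist f g}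

/-- The linear kernel of `f`: directions along which the derivative is constant. -/
def linKer {n : ℕ} (f : Fq n → ZMod 2) : Set (Fq n) :=
  {b | ∃ c : ZMod 2, ∀ x, der f b x = c}

/-- The weight of a Boolean function on `Fq n`. -/
def wt {n : ℕ} (f : Fq n → ZMod 2) : ℕ := {x : Fq n | f x = 1}.ncard

/-! Let `g` have degree at most two and put `h = f + g`. The square of `∑ₓ (-1)^(h x)` is the sum
over all directions `a` of the corresponding sums for `D_a h`. The same identity applied to `D_a h`
bounds its sum by `√(2ⁿ N_a)`, where `N_a` is the number of `b` for which `D_b D_a h` is not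
balanced. Since `σ x = x^(2^r)` is an involution and `f x = tr (σ x · x³)`, every term of
`D_b D_a h` can be moved onto `x²` under the trace, so that `D_b D_a h x = tr (c(a, b) x²) + const`
and `N_a` counts the zeros `b` of `c(a, ·)`.

If `a` lies outside the fixed field `K` of `σ`, the factorization of `σ c + c` forces `b ∈ K` or
`b + a ∈ K`, and `N_a ≤ 4`. If `a ∈ K` is nonzero, then `N_a ≤ 2^r (1 + #{t ∈ K | t³ = a⁻¹})`.
Averaging `√(1 + #{t | t³ = a})` over `a ∈ Kˣ`, instead of bounding it by its maximum, gives `√2`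
when cubing permutes `Kˣ` (`r` odd) and `4 / 3` when it is three-to-one (`r` even). -/

open Finset fwdDiff

section SignSum

/-- The sign character `z ↦ (-1)^z` of `𝔽₂`, with real values. -/
def signChar : AddChar (ZMod 2) ℝ := AddChar.zmodChar 2 (ζ := -1) (by norm_num)

lemma signChar_one : signChar 1 = -1 := by
  simp [signChar, AddChar.zmodChar_apply, ZMod.val_one]

lemma signChar_eq_ite (z : ZMod 2) : signChar z = if z = 0 then 1 else -1 := by
  fin_cases z
  · exact signChar.map_zero_eq_one
  · exact signChar_one

variable {G : Type*} [Fintype G]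

/-- The exponential sum `∑ₓ (-1)^(h x)`. -/
def signSum (h : G → ZMod 2) : ℝ := ∑ x, signChar (h x)

lemma signSum_le_card (h : G → ZMod 2) : signSum h ≤ Fintype.card G := by
  have signChar_le_one (z : ZMod 2) : signChar z ≤ 1 := by
    rw [signChar_eq_ite]; split_ifs <;> norm_num
  simpa [signSum] using Finset.sum_le_card_nsmul univ _ 1 fun x _ => signChar_le_one (h x)

lemma two_mul_ncard_ne (f g : G → ZMod 2) :
    2 * ({x | f x ≠ g x}.ncard : ℝ) = Fintype.card G - signSum (f + g) := by
  classical
  have sign_eq (x : G) : signChar ((f + g) x) = 1 - 2 * if f x ≠ g x then 1 else 0 := by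
    by_cases hx : f x = g x
    · simp [signChar_eq_ite, CharTwo.add_eq_zero, hx]
    · norm_num [signChar_eq_ite, CharTwo.add_eq_zero, hx]
  simp only [signSum, sign_eq, sum_sub_distrib, ← mul_sum, sum_boole, sum_const, nsmul_eq_mul,
    mul_one, card_univ, sub_sub_cancel]
  simp [Set.ncard_eq_toFinset_card']

variable [AddCommGroup G]

lemma sq_signSum (h : G → ZMod 2) : signSum h ^ 2 = ∑ a, signSum (Δ_[a] h) := by
  simp only [signSum, sq, sum_mul_sum]
  rw [sum_comm (f := fun a x => signChar (Δ_[a] h x))]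
  refine sum_congr rfl fun x _ => ?_
  rw [← Equiv.sum_comp (Equiv.addLeft x)]
  simp [fwdDiff, CharTwo.sub_eq_add, AddChar.map_add_eq_mul, mul_comm]

lemma signSum_le_sqrt (h : G → ZMod 2) (T : Finset G) (hT : ∀ b ∉ T, signSum (Δ_[b] h) = 0) :
    signSum h ≤ √(Fintype.card G * #T) := by
  refine Real.le_sqrt_of_sq_le ?_
  calc signSum h ^ 2 = ∑ b ∈ T, signSum (Δ_[b] h) := by
        rw [sq_signSum, sum_subset T.subset_univ fun b _ hb => hT b hb]
    _ ≤ ∑ _b ∈ T, (Fintype.card G : ℝ) := sum_le_sum fun b _ => signSum_le_card _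
    _ = Fintype.card G * #T := by simp [mul_comm]

end SignSum

section GroupHom

lemma card_filter_map_mem_le {G H : Type*} [AddGroup G] [AddGroup H] [Fintype G]
    [DecidableEq H] (φ : G →+ H) (T : Finset H) :
    #{b | φ b ∈ T} ≤ #{b | φ b = 0} * #T := by
  refine card_le_mul_card_image_of_maps_to (f := φ) (by simp) _ fun t _ => ?_
  rw [filter_filter]
  by_cases ht : t ∈ Set.range φ
  · rw [← AddMonoidHom.card_fiber_eq_of_mem_range φ ht ⟨0, map_zero φ⟩]
    exact card_le_card (monotone_filter_right _ fun b _ hb => hb.2)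
  · rw [filter_eq_empty_iff.2 fun b _ hb => ht ⟨b, hb.2⟩]
    simp

lemma sum_sqrt_one_add_card_fiber {G : Type*} [Group G] [Fintype G] [DecidableEq G] (φ : G →* G) :
    ∑ a, √(1 + #{t | φ t = a}) =
      Fintype.card G * (1 + (√(1 + #{t | φ t = 1}) - 1) / #{t | φ t = 1}) := by
  set d := #{t | φ t = 1}
  have hd : (d : ℝ) ≠ 0 := by
    exact_mod_cast (card_pos.2 ⟨1, by simp⟩).ne'
  have sqrt_eq (a : G) : √(1 + #{t | φ t = a}) = 1 + #{t | φ t = a} * ((√(1 + d) - 1) / d) := by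
    by_cases ha : a ∈ Set.range φ
    · rw [MonoidHom.card_fiber_eq_of_mem_range φ ha ⟨1, map_one φ⟩]
      field_simp
      ring
    · rw [filter_eq_empty_iff.2 fun t _ ht => ha ⟨t, ht⟩]
      simp
  have sum_card_fiber : ∑ a, (#{t | φ t = a} : ℝ) = Fintype.card G := by
    exact_mod_cast (card_eq_sum_card_fiberwise fun t _ => mem_univ (φ t)).symm
  simp only [sqrt_eq, sum_add_distrib, ← sum_mul, sum_card_fiber, sum_const, card_univ,
    nsmul_eq_mul]
  ring

lemma card_filter_pow_eq_one {G : Type*} [CommGroup G] [IsCyclic G] [Fintype G] [DecidableEq G]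
    (m : ℕ) : #{t : G | t ^ m = 1} = (Fintype.card G).gcd m := by
  rw [← Nat.card_eq_fintype_card, ← IsCyclic.card_powMonoidHom_ker, Nat.card_eq_fintype_card,
    Fintype.card_subtype]
  simp only [MonoidHom.mem_ker, powMonoidHom_apply]

end GroupHom

section FixedSubfield

variable {k F : Type*} [Field k] [Field F] [Algebra k F] (σ : F ≃ₐ[k] F)

/-- The subfield of `F` fixed by the automorphism `σ`. -/
def fixedSubfield : IntermediateField k F := .fixedField (Subgroup.zpowers σ)

instance [Finite F] : Fintype (fixedSubfield σ) := Fintype.ofFinite _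

variable {σ}

lemma mem_fixedSubfield {x : F} : x ∈ fixedSubfield σ ↔ σ x = x := by
  rw [fixedSubfield, IntermediateField.mem_fixedField_iff]
  exact ⟨fun h => h σ (Subgroup.mem_zpowers σ), fun h τ hτ =>
    (Subgroup.zpowers_le (H := MulAction.stabilizer _ x)).2 h hτ⟩

lemma involutive_of_orderOf_eq_two (hσ : orderOf σ = 2) : Function.Involutive σ := by
  intro x
  have sq_eq_one : σ ^ 2 = 1 := hσ ▸ pow_orderOf_eq_one σ
  rw [sq] at sq_eq_one
  exact DFunLike.congr_fun sq_eq_one x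

lemma card_fixedSubfield [Fintype F] {q : ℕ} (hF : Fintype.card F = q ^ 2)
    (hσ : orderOf σ = 2) : Fintype.card (fixedSubfield σ) = q := by
  have := Module.Finite.of_finite (R := k) (M := F)
  have finrank_eq : Module.finrank (fixedSubfield σ) F = 2 := by
    rw [fixedSubfield, IntermediateField.finrank_fixedField_eq_card, Nat.card_zpowers, hσ]
  rw [Module.card_eq_pow_finrank (K := fixedSubfield σ), finrank_eq] at hF
  exact Nat.pow_left_injective two_ne_zero hF

end FixedSubfield

section Sums

lemma sum_eq_apply_zero_add_sum_units {K M : Type*} [GroupWithZero K] [Fintype K] [DecidableEq K]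
    [AddCommMonoid M] (f : K → M) : ∑ x, f x = f 0 + ∑ u : Kˣ, f u := by
  rw [Fintype.sum_eq_add_sum_subtype_ne f 0, ← unitsEquivNeZero.sum_comp]
  rfl

lemma sum_eq_sum_fixedSubfield_add_sum_not_fixed {k F M : Type*} [Field k] [Field F] [Algebra k F]
    [Fintype F] [DecidableEq F] [AddCommMonoid M] (σ : F ≃ₐ[k] F) (f : F → M) :
    ∑ a, f a = f 0 + ∑ u : (fixedSubfield σ)ˣ, f (u : fixedSubfield σ) + ∑ a with σ a ≠ a, f a := by
  rw [← sum_filter_add_sum_filter_not univ (fun a => σ a = a),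
    sum_subtype (p := (· ∈ fixedSubfield σ)) _ (by simp [mem_fixedSubfield]),
    sum_eq_apply_zero_add_sum_units]
  rfl

end Sums

section Coeff

variable {F : Type*} [Field F]

/-- The coefficient `c` in `D_b D_a f x = tr (c x²) + const` for `f x = tr (σ x · x³)`, where `σ` is
an involution. Its three groups of terms come from the coefficients of `x²`, `σ x` and `x` in
`D_b D_a (σ x · x³)`, by `tr (y σ x) = tr (σ y ^ 2 x²)` and `tr (y x) = tr (y² x²)`. -/
def secondDerivCoeff (σ : F → F) (a b : F) : F :=
  (σ a * b + a * σ b) + (σ (a ^ 2 * b + a * b ^ 2)) ^ 2 + (σ a * b ^ 2 + a ^ 2 * σ b) ^ 2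

variable [CharP F 2] {S : Type*} [FunLike S F F] [RingHomClass S F F] {σ : S} {a b : F}

lemma secondDerivCoeff_of_fixed_left (ha : σ a = a) :
    secondDerivCoeff σ a b = a * (σ b + b) * (a * (σ b + b) ^ 3 - 1) := by
  simp only [secondDerivCoeff, map_add, map_mul, map_pow, ha]
  grind [CharTwo.two_eq_zero (R := F)]

lemma secondDerivCoeff_of_fixed_right (hb : σ b = b) :
    secondDerivCoeff σ a b = (σ a + a) * b * (b * (σ a + a) ^ 3 - 1) := by
  simp only [secondDerivCoeff, map_add, map_mul, map_pow, hb]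
  grind [CharTwo.two_eq_zero (R := F)]

lemma secondDerivCoeff_add_self :
    secondDerivCoeff σ a (b + a) = secondDerivCoeff σ a b := by
  simp only [secondDerivCoeff, map_add, map_mul, map_pow]
  grind [CharTwo.two_eq_zero (R := F)]

lemma map_secondDerivCoeff_add_self (hσ : Function.Involutive σ) :
    σ (secondDerivCoeff σ a b) + secondDerivCoeff σ a b =
      ((σ a + a) * (σ b + b) * (σ b + b + (σ a + a))) ^ 2 := by
  simp only [secondDerivCoeff, map_add, map_mul, map_pow, hσ _]
  grind [CharTwo.two_eq_zero (R := F)]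

lemma fixed_or_add_fixed_of_secondDerivCoeff_eq_zero (hσ : Function.Involutive σ)
    (ha : σ a ≠ a) (h : secondDerivCoeff σ a b = 0) : σ b = b ∨ σ (b + a) = b + a := by
  have hprod := map_secondDerivCoeff_add_self (a := a) (b := b) hσ
  rw [h, map_zero, add_zero, eq_comm, sq_eq_zero_iff, mul_eq_zero,
    mul_eq_zero_iff_left (CharTwo.add_eq_zero.not.2 ha), CharTwo.add_eq_zero] at hprod
  refine hprod.imp_right fun hb => CharTwo.add_eq_zero.1 ?_
  rw [map_add, ← hb]
  ring

lemma card_secondDerivCoeff_eq_zero_le_four [Fintype F] [DecidableEq F]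
    (hσ : Function.Involutive σ) (ha : σ a ≠ a) : #{b | secondDerivCoeff σ a b = 0} ≤ 4 := by
  set z := ((σ a + a) ^ 3)⁻¹
  have eq_of_fixed {b : F} (h : secondDerivCoeff σ a b = 0) (hb : σ b = b) : b = 0 ∨ b = z := by
    rw [secondDerivCoeff_of_fixed_right hb, mul_eq_zero,
      mul_eq_zero_iff_left (CharTwo.add_eq_zero.not.2 ha), sub_eq_zero] at h
    exact h.imp_right eq_inv_of_mul_eq_one_left
  have subset : ({b | secondDerivCoeff σ a b = 0} : Finset F) ⊆ {0, z, a, z + a} := by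
    intro b hb
    rw [mem_filter_univ] at hb
    simp only [mem_insert, mem_singleton]
    rcases fixed_or_add_fixed_of_secondDerivCoeff_eq_zero hσ ha hb with hfix | hfix
    · rcases eq_of_fixed hb hfix with h | h <;> simp [h]
    · rcases eq_of_fixed (secondDerivCoeff_add_self.trans hb) hfix with h | h
      · simp [CharTwo.add_eq_zero.1 h]
      · simp [← h, add_assoc, CharTwo.add_self_eq_zero]
  exact (card_le_card subset).trans card_le_four

end Coeff

section FixedCount

variable {k F : Type*} [Field k] [Field F] [CharP F 2] [Algebra k F] [Fintype F] [DecidableEq F]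
  {σ : F ≃ₐ[k] F}

lemma card_secondDerivCoeff_eq_zero_le_of_fixed (hσ : Function.Involutive σ)
    (u : (fixedSubfield σ)ˣ) :
    #{b | secondDerivCoeff σ (u : fixedSubfield σ) b = 0} ≤
      Fintype.card (fixedSubfield σ) * (1 + #{t | t ^ 3 = u⁻¹}) := by
  let φ : F →+ F := (σ : F →+ F) + AddMonoidHom.id F
  let T : Finset F := insert 0 (image (fun t : (fixedSubfield σ)ˣ => ((t : fixedSubfield σ) : F))
    {t | t ^ 3 = u⁻¹})
  have card_ker : #{b | φ b = 0} = Fintype.card (fixedSubfield σ) := by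
    refine (Fintype.card_of_subtype _ fun x => ?_).symm
    simp [φ, mem_fixedSubfield, CharTwo.add_eq_zero]
  have card_T_le : #T ≤ 1 + #{t | t ^ 3 = u⁻¹} := by
    rw [add_comm]
    exact (card_insert_le _ _).trans (Nat.add_le_add_right card_image_le 1)
  have φ_mem_T {b : F} (hb : secondDerivCoeff σ (u : fixedSubfield σ) b = 0) : φ b ∈ T := by
    have u_ne_zero : ((u : fixedSubfield σ) : F) ≠ 0 := by simp
    rw [secondDerivCoeff_of_fixed_left (mem_fixedSubfield.1 (u : fixedSubfield σ).2), mul_eq_zero,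
      mul_eq_zero_iff_left u_ne_zero, sub_eq_zero] at hb
    refine mem_insert.2 (hb.imp_right fun h => ?_)
    have t_ne_zero : σ b + b ≠ 0 := by rintro h0; simp [h0] at h
    have t_mem : σ b + b ∈ fixedSubfield σ := by
      rw [mem_fixedSubfield, map_add, hσ, add_comm]
    refine mem_image.2 ⟨Units.mk0 ⟨_, t_mem⟩ (by simpa [Subtype.ext_iff] using t_ne_zero), ?_, rfl⟩
    rw [mem_filter_univ, eq_inv_iff_mul_eq_one, mul_comm]
    ext
    exact h
  calc #{b | secondDerivCoeff σ (u : fixedSubfield σ) b = 0} ≤ #{b | φ b ∈ T} :=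
        card_le_card (monotone_filter_right _ fun _ _ => φ_mem_T)
    _ ≤ #{b | φ b = 0} * #T := card_filter_map_mem_le φ T
    _ ≤ _ := by rw [card_ker]; gcongr

end FixedCount

section TraceSums

variable {F : Type*} [Field F] [Algebra (ZMod 2) F]

local notation "Tr" => Algebra.trace (ZMod 2) F

lemma trace_sq [Finite F] [CharP F 2] (x : F) : Tr (x ^ 2) = Tr x := by
  simpa using Algebra.trace_eq_of_algEquiv (FiniteField.frobeniusAlgEquiv (ZMod 2) F 2) x

lemma signSum_trace_mul_sq_add [Fintype F] [CharP F 2] {c : F} (hc : c ≠ 0) (e : ZMod 2) :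
    signSum (fun x => Tr (c * x ^ 2) + e) = 0 := by
  obtain ⟨y, hy⟩ : ∃ y, Tr y ≠ 0 := DFunLike.ne_iff.1 (Algebra.trace_ne_zero (ZMod 2) F)
  have ne_zero : signChar.compAddMonoidHom (Tr).toAddMonoidHom ≠ 0 := by
    refine DFunLike.ne_iff.2 ⟨y, ?_⟩
    norm_num [signChar_eq_ite, hy]
  have sum_eq : ∑ x : F, signChar (Tr (c * x ^ 2)) = ∑ x : F, signChar (Tr x) :=
    (((frobeniusEquiv F 2).toEquiv.trans (Equiv.mulLeft₀ c hc)).sum_comp fun x => signChar (Tr x))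
  simp only [signSum, AddChar.map_add_eq_mul, ← sum_mul, sum_eq]
  rw [show ∑ x : F, signChar (Tr x) = 0 from AddChar.sum_eq_zero_iff_ne_zero.2 ne_zero, zero_mul]

/-- The Boolean function `x ↦ tr (σ x · x³)`, which is `x ↦ tr (x ^ (2 ^ r + 3))` when `σ` is the
`r`-th power of the Frobenius automorphism. -/
def traceMulCube (σ : F → F) (x : F) : ZMod 2 := Tr (σ x * x ^ 3)

variable [CharP F 2] {σ : F ≃ₐ[ZMod 2] F}

lemma fwdDiff_fwdDiff_traceMulCube [Finite F] (hσ : Function.Involutive σ) (a b x : F) :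
    Δ_[b] (Δ_[a] (traceMulCube σ)) x =
      Tr (secondDerivCoeff σ a b * x ^ 2) + Δ_[b] (Δ_[a] (traceMulCube σ)) 0 := by
  have trace_coeff : Tr (secondDerivCoeff σ a b * x ^ 2) =
      Tr ((σ a * b + a * σ b) * x ^ 2 + (a ^ 2 * b + a * b ^ 2) * σ x
        + (σ a * b ^ 2 + a ^ 2 * σ b) * x) := by
    have trace_mul_map (c : F) : Tr (c * σ x) = Tr (σ c ^ 2 * x ^ 2) := by
      rw [← mul_pow, trace_sq, ← Algebra.trace_eq_of_algEquiv σ, map_mul, hσ]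
    rw [secondDerivCoeff, add_mul, add_mul, map_add Tr, map_add Tr, map_add Tr, map_add Tr,
      trace_mul_map, ← trace_sq ((σ a * b ^ 2 + a ^ 2 * σ b) * x), mul_pow]
  rw [trace_coeff]
  simp only [fwdDiff, traceMulCube, ← map_sub, ← map_add]
  congr 1
  simp only [map_add, map_zero]
  grind [CharTwo.two_eq_zero (R := F)]

variable [Fintype F]

lemma signSum_fwdDiff_traceMulCube_add_le [DecidableEq F] (hσ : Function.Involutive σ)
    {g : F → ZMod 2} (hg : ∀ a b c, Δ_[c] (Δ_[b] (Δ_[a] g)) = 0) (a : F) :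
    signSum (Δ_[a] (traceMulCube σ + g)) ≤
      √(Fintype.card F * #{b | secondDerivCoeff σ a b = 0}) := by
  refine signSum_le_sqrt _ _ fun b hb => ?_
  have second_diff_g (x : F) : Δ_[b] (Δ_[a] g) x = Δ_[b] (Δ_[a] g) 0 := by
    have := congrFun (hg a b x) 0
    rwa [fwdDiff, Pi.zero_apply, zero_add, sub_eq_zero] at this
  have second_diff : Δ_[b] (Δ_[a] (traceMulCube σ + g)) = fun x =>
      Tr (secondDerivCoeff σ a b * x ^ 2) + Δ_[b] (Δ_[a] (traceMulCube σ + g)) 0 := by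
    funext x
    simp only [fwdDiff_add, Pi.add_apply, second_diff_g x]
    rw [fwdDiff_fwdDiff_traceMulCube hσ, add_assoc]
  rw [second_diff]
  exact signSum_trace_mul_sq_add (by simpa using hb) _

variable {q : ℕ}

lemma signSum_fwdDiff_le_of_not_fixed (hF : Fintype.card F = q ^ 2) (hσ : Function.Involutive σ)
    {g : F → ZMod 2} (hg : ∀ a b c, Δ_[c] (Δ_[b] (Δ_[a] g)) = 0) {a : F} (ha : σ a ≠ a) :
    signSum (Δ_[a] (traceMulCube σ + g)) ≤ 2 * q := by
  classical
  refine (signSum_fwdDiff_traceMulCube_add_le hσ hg a).trans ?_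
  refine Real.sqrt_le_iff.2 ⟨by positivity, ?_⟩
  have card_le : (#{b | secondDerivCoeff σ a b = 0} : ℝ) ≤ 4 := by
    exact_mod_cast card_secondDerivCoeff_eq_zero_le_four hσ ha
  calc (Fintype.card F : ℝ) * #{b | secondDerivCoeff σ a b = 0} ≤ q ^ 2 * 4 := by
        rw [hF]; push_cast; gcongr
    _ = (2 * q) ^ 2 := by ring

lemma signSum_fwdDiff_le_of_fixed [DecidableEq F] (hF : Fintype.card F = q ^ 2)
    (hσ : orderOf σ = 2) {g : F → ZMod 2}
    (hg : ∀ a b c, Δ_[c] (Δ_[b] (Δ_[a] g)) = 0) (u : (fixedSubfield σ)ˣ) :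
    signSum (Δ_[((u : fixedSubfield σ) : F)] (traceMulCube σ + g)) ≤
      q * √q * √(1 + #{t | t ^ 3 = u⁻¹}) := by
  have hσ' := involutive_of_orderOf_eq_two hσ
  refine (signSum_fwdDiff_traceMulCube_add_le hσ' hg _).trans ?_
  have card_le := card_secondDerivCoeff_eq_zero_le_of_fixed hσ' u
  rw [card_fixedSubfield hF hσ] at card_le
  calc √(Fintype.card F * #{b | secondDerivCoeff σ (u : fixedSubfield σ) b = 0}) ≤
        √(q ^ 2 * (q * (1 + #{t | t ^ 3 = u⁻¹}))) := by
        rw [hF]; push_cast; gcongr; exact_mod_cast card_le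
    _ = q * √q * √(1 + #{t | t ^ 3 = u⁻¹}) := by
        rw [Real.sqrt_mul (by positivity), Real.sqrt_sq (by positivity),
          Real.sqrt_mul (by positivity), mul_assoc]

/-- The mean of `√(1 + #{t | t ^ m = a})` over the elements `a` of a finite abelian group in which
`t ^ m = 1` has `d` solutions: a proportion `1 / d` of the fibers have `d` elements, the others are
empty. -/
def sqrtFiberMean (d : ℕ) : ℝ := 1 + (√(1 + d) - 1) / d

lemma sum_units_signSum_le [DecidableEq F] (hF : Fintype.card F = q ^ 2)
    (hσ : orderOf σ = 2) {g : F → ZMod 2} (hg : ∀ a b c, Δ_[c] (Δ_[b] (Δ_[a] g)) = 0) :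
    ∑ u : (fixedSubfield σ)ˣ, signSum (Δ_[((u : fixedSubfield σ) : F)] (traceMulCube σ + g)) ≤
      q * √q * ((q - 1 : ℕ) * sqrtFiberMean ((q - 1).gcd 3)) := by
  have card_units : Fintype.card (fixedSubfield σ)ˣ = q - 1 := by
    rw [Fintype.card_units, card_fixedSubfield hF hσ]
  calc _ ≤ ∑ u : (fixedSubfield σ)ˣ, q * √q * √(1 + #{t | t ^ 3 = u⁻¹}) :=
        sum_le_sum fun u _ => signSum_fwdDiff_le_of_fixed hF hσ hg u
    _ = q * √q * ∑ u : (fixedSubfield σ)ˣ, √(1 + #{t | powMonoidHom 3 t = u}) := by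
        rw [mul_sum, ← Equiv.sum_comp (Equiv.inv _)]
        simp only [Equiv.inv_apply, inv_inv, powMonoidHom_apply]
    _ = q * √q * ((q - 1 : ℕ) * sqrtFiberMean ((q - 1).gcd 3)) := by
        rw [sum_sqrt_one_add_card_fiber]
        simp only [powMonoidHom_apply, card_filter_pow_eq_one, card_units, sqrtFiberMean]

theorem sq_signSum_traceMulCube_add_le (hF : Fintype.card F = q ^ 2)
    (hσ : orderOf σ = 2) {g : F → ZMod 2} (hg : ∀ a b c, Δ_[c] (Δ_[b] (Δ_[a] g)) = 0) :
    signSum (traceMulCube σ + g) ^ 2 ≤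
      q ^ 2 + q * √q * ((q - 1) * sqrtFiberMean ((q - 1).gcd 3)) + (q ^ 2 - q) * (2 * q) := by
  classical
  have card_fixed : #{a | σ a = a} = q := by
    rw [← card_fixedSubfield hF hσ]
    exact (Fintype.card_of_subtype _ fun x => by simp [mem_fixedSubfield]).symm
  have one_le_q : 1 ≤ q := card_fixedSubfield hF hσ ▸ Fintype.card_pos
  have card_not_fixed : (#{a | σ a ≠ a} : ℝ) = q ^ 2 - q := by
    have card_add : q + #{a | σ a ≠ a} = q ^ 2 := by
      rw [← hF, ← card_univ, ← card_fixed, card_filter_add_card_filter_not]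
    exact eq_sub_of_add_eq' (by exact_mod_cast card_add)
  have sum_not_fixed_le : ∑ a with σ a ≠ a, signSum (Δ_[a] (traceMulCube σ + g)) ≤
      (q ^ 2 - q) * (2 * q) := by
    rw [← card_not_fixed, ← nsmul_eq_mul]
    exact sum_le_card_nsmul _ _ _ fun a ha => signSum_fwdDiff_le_of_not_fixed hF
      (involutive_of_orderOf_eq_two hσ) hg (mem_filter.1 ha).2
  have sum_units_le := sum_units_signSum_le hF hσ hg
  rw [Nat.cast_pred one_le_q] at sum_units_le
  have signSum_zero_le : signSum (Δ_[0] (traceMulCube σ + g)) ≤ q ^ 2 :=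
    (signSum_le_card _).trans_eq (by exact_mod_cast hF)
  rw [sq_signSum, sum_eq_sum_fixedSubfield_add_sum_not_fixed σ]
  gcongr

end TraceSums

section Frobenius

variable (F : Type*) [Field F] [Algebra (ZMod 2) F] [Finite F]

/-- The automorphism `x ↦ x ^ (2 ^ r)` of a finite field of characteristic two. -/
def frobeniusPow (r : ℕ) : F ≃ₐ[ZMod 2] F :=
  FiniteField.frobeniusAlgEquivOfAlgebraic (ZMod 2) F ^ r

lemma frobeniusPow_apply (r : ℕ) (x : F) : frobeniusPow F r x = x ^ 2 ^ r := by
  rw [frobeniusPow, AlgEquiv.coe_pow, FiniteField.coe_frobeniusAlgEquivOfAlgebraic_iterate,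
    ZMod.card]

lemma orderOf_frobeniusPow {r : ℕ} (hr : 0 < r) (hF : Module.finrank (ZMod 2) F = 2 * r) :
    orderOf (frobeniusPow F r) = 2 := by
  rw [frobeniusPow, orderOf_pow_of_dvd hr.ne', FiniteField.orderOf_frobeniusAlgEquivOfAlgebraic, hF,
    Nat.mul_div_cancel _ hr]
  rw [FiniteField.orderOf_frobeniusAlgEquivOfAlgebraic, hF]
  exact dvd_mul_left r 2

end Frobenius

section Nonlinearity

variable {n : ℕ}

lemma der_eq_fwdDiff (f : Fq n → ZMod 2) (a : Fq n) : der f a = Δ_[a] f :=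
  funext fun x => by rw [der, fwdDiff, CharTwo.sub_eq_add, add_comm]

lemma derIter_zero (l : List (Fq n)) : derIter (0 : Fq n → ZMod 2) l = 0 := by
  induction l with
  | nil => rfl
  | cons a l ih => rw [derIter, ih, der_eq_fwdDiff]; exact fwdDiff_const a 0

lemma exists_degLE_nl_eq_hdist (r : ℕ) (f : Fq n → ZMod 2) :
    ∃ g, degLE g r ∧ nl r f = hdist f g :=
  Nat.sInf_mem (s := {d | ∃ g, degLE g r ∧ d = hdist f g}) ⟨_, 0, fun l _ => derIter_zero l, rfl⟩

lemma le_nl_of_sq_signSum_le [Fintype (Fq n)] {r : ℕ} {f : Fq n → ZMod 2} {B : ℝ}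
    (hB : ∀ g, degLE g r → signSum (f + g) ^ 2 ≤ B) :
    Fintype.card (Fq n) / 2 - 1 / 2 * √B ≤ nl r f := by
  obtain ⟨g, hg, hfg⟩ := exists_degLE_nl_eq_hdist r f
  have hdist_eq : 2 * (hdist f g : ℝ) = Fintype.card (Fq n) - signSum (f + g) :=
    two_mul_ncard_ne f g
  have signSum_le : signSum (f + g) ≤ √B := Real.le_sqrt_of_sq_le (hB g hg)
  rw [hfg]
  linarith

lemma fwdDiff_eq_zero_of_degLE_two {g : Fq n → ZMod 2} (hg : degLE g 2) (a b c : Fq n) :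
    Δ_[c] (Δ_[b] (Δ_[a] g)) = 0 := by
  have derIter_eq := hg [c, b, a] rfl
  simp only [derIter, der_eq_fwdDiff] at derIter_eq
  exact derIter_eq

lemma sqrt_two_pow_pow (r k : ℕ) : √(2 ^ r) ^ k = (2 : ℝ) ^ (k * r / 2 : ℝ) := by
  rw [Real.sqrt_eq_rpow, ← Real.rpow_natCast, ← Real.rpow_natCast, ← Real.rpow_mul two_pos.le,
    ← Real.rpow_mul two_pos.le]
  ring_nf

lemma nl_two_tr_pow_ge_sqrt {r : ℕ} (hr : 0 < r) (hn : n = 2 * r) {f : Fq n → ZMod 2}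
    (hf : ∀ x, f x = tr (x ^ (2 ^ r + 3))) {κ s : ℝ}
    (hκ : sqrtFiberMean ((2 ^ r - 1).gcd 3) = κ) (hs : √(2 ^ r) = s) :
    s ^ 4 / 2 - 1 / 2 * √(s ^ 6 * 2 + κ * s ^ 5 - s ^ 4 - κ * s ^ 3) ≤ nl 2 f := by
  classical
  have := Fintype.ofFinite (Fq n)
  have hn0 : n ≠ 0 := by omega
  have card_eq : Fintype.card (Fq n) = (2 ^ r) ^ 2 := by
    rw [← Nat.card_eq_fintype_card, GaloisField.card 2 n hn0, hn, mul_comm, pow_mul]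
  have f_eq : f = traceMulCube (frobeniusPow (Fq n) r) := by
    funext x
    rw [hf, tr, traceMulCube, frobeniusPow_apply, pow_add]
  have orderOf_eq := orderOf_frobeniusPow (Fq n) hr ((GaloisField.finrank 2 hn0).trans hn)
  have bound := le_nl_of_sq_signSum_le (f := f) fun g hg =>
    f_eq ▸ sq_signSum_traceMulCube_add_le card_eq orderOf_eq (fwdDiff_eq_zero_of_degLE_two hg)
  have sq_s : (2 : ℝ) ^ r = s ^ 2 := by rw [← hs, Real.sq_sqrt (by positivity)]
  have sqrt_sq_s : √(s ^ 2) = s := by rw [← sq_s, hs]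
  push_cast [card_eq, hκ, sq_s, sqrt_sq_s] at bound
  convert bound using 2 <;> ring_nf

theorem nl_two_tr_pow_ge {r : ℕ} (hr : 0 < r) (hn : n = 2 * r) {f : Fq n → ZMod 2}
    (hf : ∀ x, f x = tr (x ^ (2 ^ r + 3))) {κ : ℝ}
    (hκ : sqrtFiberMean ((2 ^ r - 1).gcd 3) = κ) :
    (2 : ℝ) ^ ((n : ℝ) - 1) - 1 / 2 * √((2 : ℝ) ^ (3 * (n : ℝ) / 2 + 1) +
      κ * (2 : ℝ) ^ (5 * (n : ℝ) / 4) - (2 : ℝ) ^ (n : ℝ) - κ * (2 : ℝ) ^ (3 * (n : ℝ) / 4)) ≤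
        nl 2 f := by
  have rpow_eq (k : ℕ) {e : ℝ} (he : e = k * n / 4) : (2 : ℝ) ^ e = √(2 ^ r) ^ k := by
    rw [sqrt_two_pow_pow, he, hn]
    push_cast
    ring_nf
  have bound := nl_two_tr_pow_ge_sqrt hr hn hf hκ rfl
  rwa [← rpow_eq 3 (e := 3 * n / 4) (by simp), ← rpow_eq 4 (e := n) (by simp),
    ← rpow_eq 5 (e := 5 * n / 4) (by simp), ← rpow_eq 6 (e := 3 * n / 2) (by simp; ring),
    ← Real.rpow_add_one two_ne_zero, ← Real.rpow_sub_one two_ne_zero] at bound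

end Nonlinearity

section Constants

lemma gcd_two_pow_sub_one_three (r : ℕ) : (2 ^ r - 1).gcd 3 = 2 ^ r.gcd 2 - 1 :=
  Nat.pow_sub_one_gcd_pow_sub_one 2 r 2

lemma sqrtFiberMean_gcd_of_odd {r : ℕ} (hr : Odd r) :
    sqrtFiberMean ((2 ^ r - 1).gcd 3) = √2 := by
  rw [gcd_two_pow_sub_one_three, Nat.coprime_two_right.2 hr]
  norm_num [sqrtFiberMean]

lemma sqrtFiberMean_gcd_of_even {r : ℕ} (hr : Even r) :
    sqrtFiberMean ((2 ^ r - 1).gcd 3) = 4 / 3 := by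
  have sqrt_four : √(4 : ℝ) = 2 := by
    rw [Real.sqrt_eq_iff_mul_self_eq] <;> norm_num
  rw [gcd_two_pow_sub_one_three, Nat.gcd_eq_right hr.two_dvd]
  norm_num [sqrtFiberMean, sqrt_four]

end Constants

/-- Second-order nonlinearity lower bound for `tr(x^(2^r+3))` with `n = 2r`. -/
theorem second_order_nl_tr_x_pow_2r_add_3 (r n : ℕ) (hr : 0 < r) (hn : n = 2 * r)
    (f : Fq n → ZMod 2) (hf : ∀ x, f x = tr (x ^ (2 ^ r + 3))) :
    (Odd r →
      (nl 2 f : ℝ) ≥ (2:ℝ) ^ ((n:ℝ) - 1) - (1/2) * Real.sqrt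
        ((2:ℝ) ^ (3 * (n:ℝ) / 2 + 1) + (2:ℝ) ^ (5 * (n:ℝ) / 4 + 1/2)
          - (2:ℝ) ^ (n:ℝ) - (2:ℝ) ^ (3 * (n:ℝ) / 4 + 1/2))) ∧
    (Even r →
      (nl 2 f : ℝ) ≥ (2:ℝ) ^ ((n:ℝ) - 1) - (1/2) * Real.sqrt
        ((2:ℝ) ^ (3 * (n:ℝ) / 2 + 1) + (1/3) * (2:ℝ) ^ (5 * (n:ℝ) / 4 + 2)
          - (2:ℝ) ^ (n:ℝ) - (1/3) * (2:ℝ) ^ (3 * (n:ℝ) / 4 + 2))) := by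
  have bound {κ : ℝ} (hκ : sqrtFiberMean ((2 ^ r - 1).gcd 3) = κ) := nl_two_tr_pow_ge hr hn hf hκ
  constructor
  · intro hodd
    convert bound (sqrtFiberMean_gcd_of_odd hodd) using 4
    rw [Real.sqrt_eq_rpow, Real.rpow_add two_pos (5 * (n : ℝ) / 4),
      Real.rpow_add two_pos (3 * (n : ℝ) / 4)]
    ring
  · intro heven
    convert bound (sqrtFiberMean_gcd_of_even heven) using 4
    rw [Real.rpow_add two_pos (5 * (n : ℝ) / 4), Real.rpow_add two_pos (3 * (n : ℝ) / 4),
      Real.rpow_two]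
    ring
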